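/- arXiv:2303.05979 — 4 statements merged into one kernel-verified Lean document; each statement's English description precedes it below -/
import Mathlib

section
/- Legendre expansion of the inner perturbing function. Fix masses m_0,m_1,m_2 > 0, set M_1 = m_0 + m_1, M_2 = m_0 + m_1 + m_2, σ_{01} = m_0/M_1, σ_{11} = m_1/M_1, μ_1 = m_0 m_1/M_1, μ_2 = M_1 m_2/M_2, and σ̃_{1,n} = σ_{01}^{n−1} + (−1)ⁿ σ_{11}^{n−1}. Let q_1, q_2 ∈ ℝ³ \ {0} satisfy max(σ_{01}, σ_{11})·‖q_1‖ < ‖q_2‖, and set cos ζ_1 = ⟨q_1, q_2⟩/(‖q_1‖‖q_2‖). Then the series Σ_{n≥2} σ̃_{1,n} P_n(cos ζ_1) (‖q_1‖/‖q_2‖)ⁿ converges absolutely and μ_2 M_2/‖q_2‖ − m_0 m_2/‖q_2 + σ_{11} q_1‖ − m_1 m_2/‖q_2 − σ_{01} q_1‖ = −(μ_1 m_2/‖q_2‖) · Σ_{n=2}^{∞} σ̃_{1,n} P_n(cos ζ_1) (‖q_1‖/‖q_2‖)ⁿ. -/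
noncomputable section

open Real
open scoped RealInnerProductSpace

/-- Vectors in physical space `ℝ³`, with the Euclidean norm and inner product. -/
abbrev V3 : Type := EuclideanSpace ℝ (Fin 3)

/-- The `n`-th Legendre polynomial, via Rodrigues' formula
`P_n(x) = (1/(2ⁿ n!)) dⁿ/dxⁿ (x² − 1)ⁿ`. -/
def legendreP (n : ℕ) (x : ℝ) : ℝ :=
  (1 / (2 ^ n * (n.factorial : ℝ))) * iteratedDeriv n (fun y : ℝ => (y ^ 2 - 1) ^ n) x

/-!
If `x = cos θ` then `1 - 2xt + t² = (1 - zt)(1 - z̄t)` with `z = exp (iθ)`, so the binomial series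
expands `1 / √(1 - 2xt + t²) = (1 - zt)^(-1/2) (1 - z̄t)^(-1/2)` on the whole disc `|t| < 1`. As a
formal power series this product is the square root of `(1 - 2xX + X²)⁻¹` with constant term `1`;
Bonnet's recurrence, a consequence of Rodrigues' formula, says that `∑ Pₙ(x) Xⁿ` satisfies
`(1 - 2xX + X²) G' = (x - X) G`, hence is that same square root.

By the law of cosines, `‖q‖ / ‖q - s • p‖` is this generating function at `t = s ‖p‖ / ‖q‖`. In the
perturbing function the monopole terms cancel because `M₁ = m₀ + m₁`, and the dipole terms because
`q₁` is measured between the two inner bodies, which are displaced by `σ₁₁ q₁` and `-σ₀₁ q₁` from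
their centre of mass.
-/

section Rodrigues

open Polynomial

theorem iteratedDeriv_polynomial_eval {𝕜 : Type*} [NontriviallyNormedField 𝕜] (p : 𝕜[X]) (n : ℕ) :
    iteratedDeriv n (fun x => p.eval x) = fun x => (derivative^[n] p).eval x := by
  induction n with
  | zero => simp
  | succ n ih =>
    rw [iteratedDeriv_succ, ih, Function.iterate_succ_apply']
    exact funext fun x => Polynomial.deriv _

/-- The `n`-th Legendre polynomial as a formal polynomial over a field `K`, given by Rodrigues'
formula; `legendreP n` is its evaluation for `K = ℝ`. Where `2ⁿ n! = 0` in `K`, division by zero makes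
it `0`. -/
def legendrePoly (K : Type*) [Field K] (n : ℕ) : K[X] :=
  C (1 / (2 ^ n * (n.factorial : K))) * derivative^[n] ((X ^ 2 - 1) ^ n)

theorem eval_legendrePoly (n : ℕ) (x : ℝ) : (legendrePoly ℝ n).eval x = legendreP n x := by
  have h := congrFun (iteratedDeriv_polynomial_eval ((X ^ 2 - 1 : ℝ[X]) ^ n) n) x
  simp only [eval_pow, eval_sub, eval_X, eval_one] at h
  rw [legendreP, h, legendrePoly, eval_mul, eval_C]

theorem map_legendrePoly {K L : Type*} [Field K] [Field L] (f : K →+* L) (n : ℕ) :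
    (legendrePoly K n).map f = legendrePoly L n := by
  simp only [legendrePoly, Polynomial.map_mul, map_C, ← iterate_derivative_map]
  simp [map_ofNat f 2]

theorem eval_ofReal_legendrePoly (n : ℕ) (x : ℝ) :
    (legendrePoly ℂ n).eval (x : ℂ) = legendreP n x := by
  rw [← map_legendrePoly Complex.ofRealHom, ← eval_legendrePoly]
  exact eval_map_apply Complex.ofRealHom x

variable {K : Type*} [Field K] [CharZero K]

@[simp]
theorem legendrePoly_zero : legendrePoly K 0 = 1 := by
  simp [legendrePoly]

@[simp]
theorem legendrePoly_one : legendrePoly K 1 = X := by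
  simp [legendrePoly, derivative_pow, ← mul_assoc, ← C_mul]

theorem legendreP_zero (x : ℝ) : legendreP 0 x = 1 := by
  simp [← eval_legendrePoly]

theorem legendreP_one (x : ℝ) : legendreP 1 x = x := by
  simp [← eval_legendrePoly]

theorem derivative_legendrePoly_succ (n : ℕ) :
    derivative (legendrePoly K (n + 1)) =
      X * derivative (legendrePoly K n) + C ((n : K) + 1) * legendrePoly K n := by
  have hderiv : derivative ((X ^ 2 - 1 : K[X]) ^ (n + 1)) =
      C (2 * ((n : K) + 1)) * ((X ^ 2 - 1) ^ n * X) := by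
    simp only [derivative_pow, Nat.cast_add, Nat.cast_one, map_add, map_natCast, map_one,
      add_tsub_cancel_right, derivative_sub, Nat.cast_ofNat, map_ofNat, Nat.add_one_sub_one,
      pow_one, derivative_X, mul_one, derivative_one, sub_zero, map_mul]
    ring
  have hcoeff : 1 / (2 ^ (n + 1) * ((n + 1).factorial : K)) * (2 * ((n : K) + 1)) =
      1 / (2 ^ n * (n.factorial : K)) := by
    have : (n.factorial : K) ≠ 0 := mod_cast n.factorial_ne_zero
    have : (n : K) + 1 ≠ 0 := n.cast_add_one_ne_zero
    rw [Nat.factorial_succ]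
    push_cast
    field_simp
    ring
  simp only [legendrePoly, derivative_C_mul, ← Function.iterate_succ_apply']
  rw [Function.iterate_succ_apply, hderiv, iterate_derivative_C_mul, iterate_derivative_mul_X,
    ← mul_assoc, ← C_mul, hcoeff, Nat.add_sub_cancel, nsmul_eq_mul]
  simp only [Nat.cast_add, Nat.cast_one, map_add, map_natCast, map_one]
  ring

theorem derivative_legendrePoly_add_two (n : ℕ) :
    derivative (legendrePoly K (n + 2)) =
      C (2 * (n : K) + 3) * legendrePoly K (n + 1) + derivative (legendrePoly K n) := by
  have hderiv : derivative^[2] ((X ^ 2 - 1 : K[X]) ^ (n + 2)) =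
      C (2 * ((n : K) + 2) * (2 * n + 3)) * (X ^ 2 - 1) ^ (n + 1) +
        C (4 * ((n : K) + 1) * (n + 2)) * (X ^ 2 - 1) ^ n := by
    simp only [Function.iterate_succ, Function.iterate_zero, Function.comp_apply, id_eq,
      derivative_pow, Nat.cast_add, Nat.cast_ofNat, map_add, map_natCast, map_ofNat,
      Nat.add_one_sub_one, derivative_sub, pow_one, derivative_X, mul_one, derivative_one,
      sub_zero, derivative_mul, derivative_natCast, derivative_ofNat, add_zero, zero_mul,
      Nat.cast_one, map_one, add_tsub_cancel_right, zero_add, map_mul]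
    ring
  have : (n.factorial : K) ≠ 0 := mod_cast n.factorial_ne_zero
  have : (n : K) + 1 ≠ 0 := n.cast_add_one_ne_zero
  have : (n : K) + 1 + 1 ≠ 0 := mod_cast (n + 1).succ_ne_zero
  have hcoeff₁ : 1 / (2 ^ (n + 2) * ((n + 2).factorial : K)) * (2 * ((n : K) + 2) * (2 * n + 3)) =
      (2 * n + 3) * (1 / (2 ^ (n + 1) * ((n + 1).factorial : K))) := by
    simp only [Nat.factorial_succ]
    push_cast
    field_simp
    ring
  have hcoeff₀ : 1 / (2 ^ (n + 2) * ((n + 2).factorial : K)) * (4 * ((n : K) + 1) * (n + 2)) =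
      1 / (2 ^ n * (n.factorial : K)) := by
    simp only [Nat.factorial_succ]
    push_cast
    field_simp
    ring
  simp only [legendrePoly, derivative_C_mul, ← Function.iterate_succ_apply']
  rw [show (n + 2).succ = (n + 1) + 2 by rfl, Function.iterate_add_apply, hderiv,
    iterate_map_add, iterate_derivative_C_mul, iterate_derivative_C_mul, mul_add,
    ← mul_assoc, ← C_mul, hcoeff₁, ← mul_assoc, ← C_mul, hcoeff₀, C_mul, mul_assoc]

theorem X_sq_sub_one_mul_derivative_legendrePoly_succ (n : ℕ) :
    (X ^ 2 - 1) * derivative (legendrePoly K (n + 1)) =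
      C ((n : K) + 1) * (X * legendrePoly K (n + 1) - legendrePoly K n) := by
  have hstep := derivative_legendrePoly_succ (K := K) (n + 1)
  have hX : X * derivative (legendrePoly K (n + 1)) =
      derivative (legendrePoly K n) + C ((n : K) + 1) * legendrePoly K (n + 1) := by
    rw [derivative_legendrePoly_add_two] at hstep
    simp only [map_add, map_mul, map_natCast, map_one, map_ofNat, Nat.cast_add, Nat.cast_one]
      at hstep ⊢
    linear_combination -hstep
  linear_combination X * hX - derivative_legendrePoly_succ (K := K) n

/-- **Bonnet's recurrence**. -/
theorem legendrePoly_add_two (n : ℕ) :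
    C ((n : K) + 2) * legendrePoly K (n + 2) =
      C (2 * (n : K) + 3) * X * legendrePoly K (n + 1) - C ((n : K) + 1) * legendrePoly K n := by
  have hstep := derivative_legendrePoly_succ (K := K) (n + 1)
  have h₁ := X_sq_sub_one_mul_derivative_legendrePoly_succ (K := K) n
  have h₂ := X_sq_sub_one_mul_derivative_legendrePoly_succ (K := K) (n + 1)
  apply mul_left_cancel₀ (X_ne_zero (R := K))
  simp only [map_add, map_mul, map_natCast, map_one, map_ofNat, Nat.cast_add, Nat.cast_one]
    at hstep h₁ h₂ ⊢
  linear_combination (X ^ 2 - 1) * hstep + X * h₁ - h₂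

end Rodrigues

section FormalGeneratingFunction

open PowerSeries

theorem powerSeries_eq_of_sq_eq_sq {R : Type*} [CommRing R] [NoZeroDivisors R] [NeZero (2 : R)]
    {f g : R⟦X⟧} (h : f ^ 2 = g ^ 2) (hf : constantCoeff f = 1) (hg : constantCoeff g = 1) :
    f = g := by
  refine (sq_eq_sq_iff_eq_or_eq_neg.mp h).resolve_right fun hneg => two_ne_zero (α := R) ?_
  have hone : (1 : R) = -1 := by simpa [hf, hg] using congrArg constantCoeff hneg
  linear_combination hone

/-- The formal power series `(1 - zX) ^ (-1/2)`. -/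
def invSqrtSeries {K : Type*} [Field K] [CharZero K] (z : K) : K⟦X⟧ :=
  rescale (-z) (PowerSeries.binomialSeries K (-1 / 2 : K))

/-- The formal generating function `∑ Pₙ(x) Xⁿ` of the Legendre polynomials at the point `x`. -/
def legendreSeries {K : Type*} [Field K] (x : K) : K⟦X⟧ :=
  PowerSeries.mk fun n => (legendrePoly K n).eval x

variable {K : Type*} [Field K] [CharZero K]

theorem constantCoeff_invSqrtSeries (z : K) : constantCoeff (invSqrtSeries z) = 1 := by
  rw [← coeff_zero_eq_constantCoeff_apply, invSqrtSeries, coeff_rescale]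
  simp

theorem one_sub_mul_invSqrtSeries_sq (z : K) :
    (1 - C z * X) * invSqrtSeries z ^ 2 = 1 := by
  have h : (1 + X) * PowerSeries.binomialSeries K (-1 / 2 : K) ^ 2 = 1 := by
    have hone : PowerSeries.binomialSeries K (1 : K) = 1 + X := by
      simpa using PowerSeries.binomialSeries_nat (R := K) (A := K) 1
    rw [pow_two, ← PowerSeries.binomialSeries_add, ← hone, ← PowerSeries.binomialSeries_add]
    norm_num
  simpa [sub_eq_add_neg, invSqrtSeries, rescale_X] using congrArg (rescale (-z)) h

theorem constantCoeff_legendreSeries (x : K) : constantCoeff (legendreSeries x) = 1 := by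
  simp [← coeff_zero_eq_constantCoeff_apply, legendreSeries]

theorem derivative_legendreSeries (x : K) :
    (1 - C (2 * x) * X + X ^ 2) * d⁄dX K (legendreSeries x) = (C x - X) * legendreSeries x := by
  have hexpand : (1 - C (2 * x) * X + X ^ 2) * d⁄dX K (legendreSeries x) =
      d⁄dX K (legendreSeries x) - C (2 * x) * (X * d⁄dX K (legendreSeries x)) +
        X * (X * d⁄dX K (legendreSeries x)) := by
    ring
  rw [hexpand, sub_mul]
  ext n
  simp only [map_add, map_sub, coeff_C_mul]
  rcases n with _ | n
  · simp only [coeff_zero_X_mul, coeff_derivative]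
    simp [legendreSeries]
  · have hrec := congrArg (Polynomial.eval x) (legendrePoly_add_two (K := K) n)
    simp only [Polynomial.eval_mul, Polynomial.eval_sub, Polynomial.eval_C, Polynomial.eval_X]
      at hrec
    rcases n with _ | n
    · simp only [CharP.cast_eq_zero, zero_add, mul_zero, legendrePoly_one, Polynomial.eval_X,
        legendrePoly_zero, Polynomial.eval_one, mul_one, legendreSeries, coeff_derivative,
        Nat.reduceAdd, coeff_mk, Nat.cast_one, coeff_succ_X_mul, coeff_zero_eq_constantCoeff,
        map_mul, constantCoeff_X, zero_mul, add_zero] at hrec ⊢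
      linear_combination hrec
    · simp only [Nat.cast_add, Nat.cast_one, legendreSeries, coeff_derivative, coeff_mk,
        coeff_succ_X_mul] at hrec ⊢
      linear_combination hrec

theorem legendreSeries_sq_mul (x : K) :
    legendreSeries x ^ 2 * (1 - C (2 * x) * X + X ^ 2) = 1 := by
  apply derivative.ext
  · have hode := derivative_legendreSeries x
    have hquad : d⁄dX K (1 - C (2 * x) * X + X ^ 2 : K⟦X⟧) = -2 * (C x - X) := by
      simp only [map_add, map_sub, Derivation.map_one_eq_zero, Derivation.leibniz,
        Derivation.leibniz_pow, derivative_X, derivative_C, smul_eq_mul, nsmul_eq_mul]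
      rw [map_mul, map_ofNat]
      push_cast
      ring
    rw [Derivation.leibniz, Derivation.leibniz_pow, hquad, derivative_one]
    simp only [smul_eq_mul, nsmul_eq_mul]
    push_cast
    linear_combination 2 * legendreSeries x * hode
  · simp [constantCoeff_legendreSeries]

theorem legendreSeries_eq_mul {x z w : K} (hadd : z + w = 2 * x) (hmul : z * w = 1) :
    legendreSeries x = invSqrtSeries z * invSqrtSeries w := by
  have hfactor : (1 - C (2 * x) * X + X ^ 2 : K⟦X⟧) = (1 - C z * X) * (1 - C w * X) := by
    have hadd' : C z + C w = C (2 * x) := by rw [← map_add, hadd]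
    have hmul' : C z * C w = 1 := by rw [← map_mul, hmul, map_one]
    linear_combination X * hadd' - X ^ 2 * hmul'
  refine powerSeries_eq_of_sq_eq_sq
    (mul_right_cancel₀ (right_ne_zero_of_mul_eq_one (legendreSeries_sq_mul x)) ?_)
    (constantCoeff_legendreSeries x) (by simp [constantCoeff_invSqrtSeries])
  calc legendreSeries x ^ 2 * (1 - C (2 * x) * X + X ^ 2)
      = ((1 - C z * X) * invSqrtSeries z ^ 2) * ((1 - C w * X) * invSqrtSeries w ^ 2) := by
        rw [legendreSeries_sq_mul, one_sub_mul_invSqrtSeries_sq, one_sub_mul_invSqrtSeries_sq,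
          one_mul]
    _ = (invSqrtSeries z * invSqrtSeries w) ^ 2 * (1 - C (2 * x) * X + X ^ 2) := by
        rw [hfactor]
        ring

end FormalGeneratingFunction

section Convergence

open PowerSeries ComplexConjugate

theorem hasSum_coeff_mul {R : Type*} [NormedCommRing R] [CompleteSpace R] {f g : R⟦X⟧} {t a b : R}
    (hf : HasSum (fun n => coeff n f * t ^ n) a) (hg : HasSum (fun n => coeff n g * t ^ n) b)
    (hf' : Summable fun n => ‖coeff n f * t ^ n‖) (hg' : Summable fun n => ‖coeff n g * t ^ n‖) :
    HasSum (fun n => coeff n (f * g) * t ^ n) (a * b) := by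
  have hcoeff (n : ℕ) : ∑ ij ∈ Finset.HasAntidiagonal.antidiagonal n,
      coeff ij.1 f * t ^ ij.1 * (coeff ij.2 g * t ^ ij.2) = coeff n (f * g) * t ^ n := by
    rw [coeff_mul, Finset.sum_mul]
    refine Finset.sum_congr rfl fun ij hij => ?_
    rw [← Finset.HasAntidiagonal.mem_antidiagonal.mp hij, pow_add]
    ring
  have hsum := summable_norm_sum_mul_antidiagonal_of_summable_norm hf' hg'
  have htsum := tsum_mul_tsum_eq_tsum_sum_antidiagonal_of_summable_norm hf' hg'
  simp only [hcoeff] at hsum htsum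
  rw [← hf.tsum_eq, ← hg.tsum_eq, htsum]
  exact hsum.of_norm.hasSum

theorem hasSum_ringChoose_mul_pow (a : ℂ) {u : ℂ} (hu : ‖u‖ < 1) :
    HasSum (fun n => Ring.choose a n * u ^ n) ((1 + u) ^ a) := by
  have hball : u ∈ Metric.eball (0 : ℂ) 1 := by
    rw [← ENNReal.ofReal_one, Metric.eball_ofReal]
    simpa using hu
  simp only [mul_comm (Ring.choose a _)]
  simpa [_root_.binomialSeries, FormalMultilinearSeries.coeff_ofScalars] using
    (Complex.one_add_cpow_hasFPowerSeriesOnBall_zero (a := a)).hasSum hball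

theorem hasSum_coeff_invSqrtSeries {z t : ℂ} (h : ‖z * t‖ < 1) :
    HasSum (fun n => coeff n (invSqrtSeries z) * t ^ n) ((1 - z * t) ^ (-1 / 2 : ℂ)) := by
  have hsum := hasSum_ringChoose_mul_pow (-1 / 2) (u := -(z * t)) (by rwa [norm_neg])
  convert hsum using 2 with n
  · rw [invSqrtSeries, coeff_rescale, PowerSeries.binomialSeries_coeff, neg_mul_eq_neg_mul,
      mul_pow, smul_eq_mul, mul_one]
    ring
  · rw [sub_eq_add_neg]

theorem conj_one_sub_cpow_mul_self {u : ℂ} (hu : ‖u‖ < 1) :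
    (1 - u) ^ (-1 / 2 : ℂ) * (1 - conj u) ^ (-1 / 2 : ℂ) = ((‖1 - u‖⁻¹ : ℝ) : ℂ) := by
  have harg : (1 - u).arg ≠ π :=
    Complex.slitPlane_arg_ne_pi (by
      simpa [sub_eq_add_neg] using
        Complex.mem_slitPlane_of_norm_lt_one (z := -u) (by rwa [norm_neg]))
  have hexp : (-1 / 2 : ℂ) = ((-1 / 2 : ℝ) : ℂ) := by push_cast; rfl
  have hconj : (1 - conj u) ^ (-1 / 2 : ℂ) = conj ((1 - u) ^ (-1 / 2 : ℂ)) := by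
    have := Complex.conj_cpow (1 - u) (-1 / 2) harg
    rwa [hexp, Complex.conj_ofReal, map_sub, map_one, ← hexp] at this
  rw [hconj, Complex.mul_conj', hexp, Complex.norm_cpow_real, ← Complex.ofReal_pow,
    ← Real.rpow_mul_natCast (norm_nonneg _)]
  norm_num [Real.rpow_neg_one]

theorem hasSum_legendreP_re_mul_pow {z : ℂ} (hz : ‖z‖ = 1) {t : ℝ} (ht : |t| < 1) :
    HasSum (fun n => legendreP n z.re * t ^ n) ‖1 - z * t‖⁻¹ := by
  have hnorm : ‖z * t‖ < 1 := by simpa [hz] using ht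
  have hnorm' : ‖conj z * t‖ < 1 := by simpa [hz] using ht
  have hadd : z + conj z = 2 * (z.re : ℂ) := by simpa using Complex.add_conj z
  have hmul : z * conj z = 1 := by simp [Complex.mul_conj', hz]
  have h := hasSum_coeff_invSqrtSeries hnorm
  have h' := hasSum_coeff_invSqrtSeries hnorm'
  have hprod := hasSum_coeff_mul h h' h.summable.norm h'.summable.norm
  rw [← legendreSeries_eq_mul hadd hmul,
    show conj z * (t : ℂ) = conj (z * t) by simp, conj_one_sub_cpow_mul_self hnorm] at hprod
  simp only [legendreSeries, coeff_mk, eval_ofReal_legendrePoly] at hprod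
  exact_mod_cast hprod

theorem norm_one_sub_exp_mul_I_mul (θ t : ℝ) :
    ‖1 - Complex.exp (θ * Complex.I) * t‖ = √(1 - 2 * cos θ * t + t ^ 2) := by
  rw [Complex.norm_def, Complex.normSq_apply]
  congr 1
  simp only [Complex.sub_re, Complex.one_re, Complex.mul_re, Complex.exp_ofReal_mul_I_re,
    Complex.ofReal_re, Complex.exp_ofReal_mul_I_im, Complex.ofReal_im, mul_zero, sub_zero,
    Complex.sub_im, Complex.one_im, Complex.mul_im, zero_add, zero_sub]
  linear_combination t ^ 2 * sin_sq_add_cos_sq θ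

theorem hasSum_legendreP_mul_pow {x t : ℝ} (hx : |x| ≤ 1) (ht : |t| < 1) :
    HasSum (fun n => legendreP n x * t ^ n) (√(1 - 2 * x * t + t ^ 2))⁻¹ := by
  have hcos : cos (arccos x) = x := cos_arccos (abs_le.mp hx).1 (abs_le.mp hx).2
  simpa only [Complex.exp_ofReal_mul_I_re, norm_one_sub_exp_mul_I_mul, hcos] using
    hasSum_legendreP_re_mul_pow (Complex.norm_exp_ofReal_mul_I (arccos x)) ht

end Convergence

section Potential

open InnerProductGeometry

variable {E : Type*} [NormedAddCommGroup E] [InnerProductSpace ℝ E]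

theorem sqrt_eq_norm_sub_smul_div_norm {p q : E} (hq : q ≠ 0) (s : ℝ) :
    √(1 - 2 * cos (angle p q) * (s * (‖p‖ / ‖q‖)) + (s * (‖p‖ / ‖q‖)) ^ 2) =
      ‖q - s • p‖ / ‖q‖ := by
  have hsq : 1 - 2 * cos (angle p q) * (s * (‖p‖ / ‖q‖)) + (s * (‖p‖ / ‖q‖)) ^ 2 =
      (‖q - s • p‖ / ‖q‖) ^ 2 := by
    have : ‖q‖ ≠ 0 := norm_ne_zero_iff.mpr hq
    rw [div_pow, norm_sub_sq_real, inner_smul_right, real_inner_comm,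
      ← cos_angle_mul_norm_mul_norm, norm_smul, mul_pow ‖s‖, norm_eq_abs, sq_abs]
    field_simp
  rw [hsq, sqrt_sq (by positivity)]

theorem hasSum_legendreP_cos_angle {p q : E} {s : ℝ} (hs : |s| * ‖p‖ < ‖q‖) :
    HasSum (fun n => legendreP n (cos (angle p q)) * (s * (‖p‖ / ‖q‖)) ^ n)
      (‖q‖ / ‖q - s • p‖) := by
  have hq : 0 < ‖q‖ := (by positivity : 0 ≤ |s| * ‖p‖).trans_lt hs
  have ht : |s * (‖p‖ / ‖q‖)| < 1 := by
    rwa [abs_mul, abs_of_nonneg (div_nonneg (norm_nonneg p) hq.le), ← mul_div_assoc,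
      div_lt_one hq]
  have hsum := hasSum_legendreP_mul_pow (abs_cos_le_one (angle p q)) ht
  rwa [sqrt_eq_norm_sub_smul_div_norm (norm_pos_iff.mp hq), inv_div] at hsum

theorem exists_hasSum_legendreP_tail {p q : E} {s : ℝ} (hs : |s| * ‖p‖ < ‖q‖) :
    ∃ T, HasSum (fun n => s ^ (n + 1) * legendreP (n + 2) (cos (angle p q)) *
        (‖p‖ / ‖q‖) ^ (n + 2)) T ∧
      ‖q‖ / ‖q - s • p‖ = 1 + s * cos (angle p q) * (‖p‖ / ‖q‖) + s * T := by
  have hsum := (hasSum_nat_add_iff' 2).mpr (hasSum_legendreP_cos_angle hs)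
  set x := cos (angle p q)
  set r := ‖p‖ / ‖q‖
  simp only [Finset.sum_range_succ, Finset.sum_range_zero, legendreP_zero, legendreP_one,
    pow_zero, pow_one, mul_one, zero_add] at hsum
  have hterm (n : ℕ) : legendreP (n + 2) x * (s * r) ^ (n + 2) =
      s * (s ^ (n + 1) * legendreP (n + 2) x * r ^ (n + 2)) := by
    ring
  simp only [hterm] at hsum
  have hsummable : Summable fun n => s ^ (n + 1) * legendreP (n + 2) x * r ^ (n + 2) := by
    rcases eq_or_ne s 0 with rfl | hs0
    · simp
    · exact (summable_mul_left_iff hs0).mp hsum.summable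
  refine ⟨_, hsummable.hasSum, ?_⟩
  rw [← tsum_mul_left, hsum.tsum_eq]
  ring

theorem inner_perturbing_function_legendre_expansion_general
    (m0 m1 m2 : ℝ) (hM1 : m0 + m1 ≠ 0) (hM2 : m0 + m1 + m2 ≠ 0) (q1 q2 : E)
    (hsep : max |m0 / (m0 + m1)| |m1 / (m0 + m1)| * ‖q1‖ < ‖q2‖) :
    (Summable fun n : ℕ =>
      |((m0 / (m0 + m1)) ^ (n + 1) + (-1 : ℝ) ^ (n + 2) * (m1 / (m0 + m1)) ^ (n + 1))
        * legendreP (n + 2) (cos (angle q1 q2)) * (‖q1‖ / ‖q2‖) ^ (n + 2)|) ∧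
    ((m0 + m1) * m2 / (m0 + m1 + m2) * (m0 + m1 + m2) / ‖q2‖
        - m0 * m2 / ‖q2 + (m1 / (m0 + m1)) • q1‖
        - m1 * m2 / ‖q2 - (m0 / (m0 + m1)) • q1‖
      = -(m0 * m1 / (m0 + m1) * m2 / ‖q2‖) *
          ∑' n : ℕ,
            ((m0 / (m0 + m1)) ^ (n + 1) + (-1 : ℝ) ^ (n + 2) * (m1 / (m0 + m1)) ^ (n + 1))
              * legendreP (n + 2) (cos (angle q1 q2)) * (‖q1‖ / ‖q2‖) ^ (n + 2)) := by
  have hq2 : ‖q2‖ ≠ 0 := ((by positivity : 0 ≤ _ * ‖q1‖).trans_lt hsep).ne'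
  rw [max_mul_of_nonneg _ _ (norm_nonneg _), max_lt_iff, ← abs_neg (m1 / _)] at hsep
  obtain ⟨T0, hT0, h0⟩ := exists_hasSum_legendreP_tail hsep.1
  obtain ⟨T1, hT1, h1⟩ := exists_hasSum_legendreP_tail hsep.2
  have hT : HasSum (fun n : ℕ =>
      ((m0 / (m0 + m1)) ^ (n + 1) + (-1 : ℝ) ^ (n + 2) * (m1 / (m0 + m1)) ^ (n + 1))
        * legendreP (n + 2) (cos (angle q1 q2)) * (‖q1‖ / ‖q2‖) ^ (n + 2)) (T0 - T1) := by
    refine (hT0.sub hT1).congr_fun fun n => ?_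
    rw [neg_pow (m1 / _)]
    ring
  refine ⟨hT.summable.abs, ?_⟩
  rw [neg_smul, sub_neg_eq_add] at h1
  have hpotential (m : ℝ) (v : E) : m / ‖v‖ = m / ‖q2‖ * (‖q2‖ / ‖v‖) :=
    (div_mul_div_cancel₀ hq2).symm
  rw [hT.tsum_eq, hpotential _ (q2 - _), hpotential _ (q2 + _), h0, h1]
  field_simp
  ring

end Potential

/-- **Legendre expansion of the inner perturbing function.** -/
theorem inner_perturbing_function_legendre_expansion
    (m0 m1 m2 : ℝ) (hm0 : 0 < m0) (hm1 : 0 < m1) (hm2 : 0 < m2)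
    (q1 q2 : V3) (hq1 : q1 ≠ 0) (hq2 : q2 ≠ 0)
    (hsep : max (m0 / (m0 + m1)) (m1 / (m0 + m1)) * ‖q1‖ < ‖q2‖) :
    (Summable fun n : ℕ =>
      |((m0 / (m0 + m1)) ^ (n + 1) + (-1 : ℝ) ^ (n + 2) * (m1 / (m0 + m1)) ^ (n + 1))
        * legendreP (n + 2) (⟪q1, q2⟫ / (‖q1‖ * ‖q2‖)) * (‖q1‖ / ‖q2‖) ^ (n + 2)|) ∧
    ((m0 + m1) * m2 / (m0 + m1 + m2) * (m0 + m1 + m2) / ‖q2‖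
        - m0 * m2 / ‖q2 + (m1 / (m0 + m1)) • q1‖
        - m1 * m2 / ‖q2 - (m0 / (m0 + m1)) • q1‖
      = -(m0 * m1 / (m0 + m1) * m2 / ‖q2‖) *
          ∑' n : ℕ,
            ((m0 / (m0 + m1)) ^ (n + 1) + (-1 : ℝ) ^ (n + 2) * (m1 / (m0 + m1)) ^ (n + 1))
              * legendreP (n + 2) (⟪q1, q2⟫ / (‖q1‖ * ‖q2‖)) * (‖q1‖ / ‖q2‖) ^ (n + 2)) := by
  have hM1 : 0 < m0 + m1 := add_pos hm0 hm1
  simp only [← InnerProductGeometry.cos_angle]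
  refine inner_perturbing_function_legendre_expansion_general m0 m1 m2 hM1.ne'
    (add_pos hM1 hm2).ne' q1 q2 ?_
  rwa [abs_of_pos (div_pos hm0 hM1), abs_of_pos (div_pos hm1 hM1)]
end
end

section
/- Equilibria of the quadrupolar Hamiltonian and the associated periodic orbits. Let L_1 > 0 and 0 < Γ̃_2 < √(3/5)·L_1. Then 2/(5(1 − Γ̃_2²/L_1²)) ∈ (2/5, 1), there is a unique γ_1^min ∈ (0, π/2) with sin²γ_1^min = 2/(5(1 − Γ̃_2²/L_1²)), and setting γ_1^max = π − γ_1^min, the points (γ_1, Γ_1) = (γ_1^min, L_1) and (γ_1^max, L_1) are equilibria of the Hamiltonian vector field γ̇_1 = ∂H_0^{12}/∂Γ_1, Γ̇_1 = −∂H_0^{12}/∂γ_1. Moreover, for any γ̃_2^0 ∈ ℝ, the curves t ↦ (γ_1^min, L_1, γ̃_2^0 + (2Γ̃_2/L_1²)t, Γ̃_2) and t ↦ (γ_1^max, L_1, γ̃_2^0 + (2Γ̃_2/L_1²)t, Γ̃_2) are solutions of the full Hamiltonian system γ̇_1 = ∂H_0^{12}/∂Γ_1, Γ̇_1 = −∂H_0^{12}/∂γ_1,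 dγ̃_2/dt = ∂H_0^{12}/∂Γ̃_2, dΓ̃_2/dt = −∂H_0^{12}/∂γ̃_2 = 0. -/
noncomputable section

open Real

/-- The quadrupolar model Hamiltonian
`H₀¹²(γ₁, Γ₁) = (1 − Γ₁²/L₁²)·[2 − 5(1 − Γ̃₂²/Γ₁²) sin²γ₁] + Γ̃₂²/L₁²`,
with parameters `L1` and `G2 = Γ̃₂`; it does not depend on the angle `γ̃₂`
conjugate to `Γ̃₂`. -/
def H012 (L1 γ1 Γ1 G2 : ℝ) : ℝ :=
  (1 - Γ1 ^ 2 / L1 ^ 2) * (2 - 5 * (1 - G2 ^ 2 / Γ1 ^ 2) * Real.sin γ1 ^ 2) + G2 ^ 2 / L1 ^ 2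

/-! The factor `1 - Γ₁² / L₁²` vanishes on the boundary `Γ₁ = L₁`. There the Hamiltonian equals
`Γ̃₂² / L₁²` for every `γ₁`, so its `γ₁`-derivative is zero and its `Γ̃₂`-derivative is the
constant `2 Γ̃₂ / L₁²`, the drift rate of the angle `γ̃₂`; its `Γ₁`-derivative is `-2 / L₁` times
the bracket `2 - 5 (1 - Γ̃₂² / Γ₁²) sin² γ₁`. Equilibria on the boundary are therefore the zeros
of the bracket. The bound on `Γ̃₂` puts the required value of `sin² γ₁` strictly between `2 / 5`
and `1`, hence it is attained exactly once in `(0, π / 2)`, and again at the mirror angle because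
`sin (π - γ) = sin γ`. -/

section HamiltonEquations

/-- The point `(q, p)` is an equilibrium of the Hamiltonian vector field `q' = ∂H/∂p`,
`p' = -∂H/∂q`. The partial derivatives are `deriv`s, which are `0` where `H` is not
differentiable. -/
def IsEquilibrium (H : ℝ → ℝ → ℝ) (q p : ℝ) : Prop :=
  deriv (fun y => H q y) p = 0 ∧ deriv (fun x => H x p) q = 0

/-- The curve `(q, p, θ, P)` solves Hamilton's equations of a Hamiltonian `H q p P`, where `θ` is
the angle conjugate to `P`. As `H` does not depend on `θ`, the equation for `P` is `P' = 0`. The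
partial derivatives are `deriv`s, as in `IsEquilibrium`. -/
def IsHamiltonianSolution (H : ℝ → ℝ → ℝ → ℝ) (q p θ P : ℝ → ℝ) : Prop :=
  ∀ t, HasDerivAt q (deriv (fun y => H (q t) y (P t)) (p t)) t ∧
    HasDerivAt p (-deriv (fun x => H x (p t) (P t)) (q t)) t ∧
    HasDerivAt θ (deriv (fun y => H (q t) (p t) y) (P t)) t ∧
    HasDerivAt P 0 t

theorem IsEquilibrium.isHamiltonianSolution {H : ℝ → ℝ → ℝ → ℝ} {q p P ω : ℝ}
    (heq : IsEquilibrium (fun x y => H x y P) q p) (hω : deriv (fun y => H q p y) P = ω) (θ₀ : ℝ) :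
    IsHamiltonianSolution H (fun _ => q) (fun _ => p) (fun t => θ₀ + ω * t) (fun _ => P) := by
  intro t
  obtain ⟨hp, hq⟩ := heq
  rw [hp, hq, hω, neg_zero]
  have hangle : HasDerivAt (fun s => θ₀ + ω * s) ω t := by
    simpa using ((hasDerivAt_id t).const_mul ω).const_add θ₀
  exact ⟨hasDerivAt_const t q, hasDerivAt_const t p, hangle, hasDerivAt_const t P⟩

end HamiltonEquations

section QuadrupolarHamiltonian

variable {L1 : ℝ} (γ G2 : ℝ)

theorem hasDerivAt_H012_Γ1 {Γ1 : ℝ} (hΓ1 : Γ1 ≠ 0) :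
    HasDerivAt (fun Γ => H012 L1 γ Γ G2)
      (-(2 * Γ1 / L1 ^ 2) * (2 - 5 * (1 - G2 ^ 2 / Γ1 ^ 2) * sin γ ^ 2) -
        (1 - Γ1 ^ 2 / L1 ^ 2) * (10 * G2 ^ 2 / Γ1 ^ 3 * sin γ ^ 2)) Γ1 := by
  have hfactor : HasDerivAt (fun Γ => 1 - Γ ^ 2 / L1 ^ 2) (-(2 * Γ1 / L1 ^ 2)) Γ1 := by
    simpa using ((hasDerivAt_pow 2 Γ1).div_const (L1 ^ 2)).const_sub 1
  have hinv : HasDerivAt (fun Γ => G2 ^ 2 / Γ ^ 2) (-(2 * G2 ^ 2 / Γ1 ^ 3)) Γ1 := by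
    refine ((hasDerivAt_const Γ1 (G2 ^ 2)).div (hasDerivAt_pow 2 Γ1)
      (pow_ne_zero 2 hΓ1)).congr_deriv ?_
    simp only [Nat.cast_ofNat]
    field_simp
    ring
  have hbracket : HasDerivAt (fun Γ => 2 - 5 * (1 - G2 ^ 2 / Γ ^ 2) * sin γ ^ 2)
      (-(10 * G2 ^ 2 / Γ1 ^ 3 * sin γ ^ 2)) Γ1 :=
    ((((hinv.const_sub 1).const_mul 5).mul_const (sin γ ^ 2)).const_sub 2).congr_deriv (by ring)
  exact ((hfactor.mul hbracket).add_const (G2 ^ 2 / L1 ^ 2)).congr_deriv (by ring)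

theorem H012_self (hL1 : L1 ≠ 0) : H012 L1 γ L1 G2 = G2 ^ 2 / L1 ^ 2 := by
  simp [H012, hL1]

theorem deriv_H012_Γ1_self (hL1 : L1 ≠ 0) :
    deriv (fun Γ => H012 L1 γ Γ G2) L1 =
      -(2 / L1) * (2 - 5 * (1 - G2 ^ 2 / L1 ^ 2) * sin γ ^ 2) := by
  rw [(hasDerivAt_H012_Γ1 γ G2 hL1).deriv, div_self (pow_ne_zero 2 hL1), sub_self, zero_mul,
    sub_zero, sq L1, mul_div_mul_right _ _ hL1]

theorem deriv_H012_γ1_self (hL1 : L1 ≠ 0) : deriv (fun γ' => H012 L1 γ' L1 G2) γ = 0 := by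
  simp only [H012_self _ _ hL1, deriv_const]

theorem deriv_H012_G2_self (hL1 : L1 ≠ 0) :
    deriv (fun G => H012 L1 γ L1 G) G2 = 2 * G2 / L1 ^ 2 := by
  simp [H012_self _ _ hL1]

theorem isEquilibrium_H012_self_iff (hL1 : L1 ≠ 0) (hratio : G2 ^ 2 / L1 ^ 2 ≠ 1) :
    IsEquilibrium (fun γ' Γ => H012 L1 γ' Γ G2) γ L1 ↔
      sin γ ^ 2 = 2 / (5 * (1 - G2 ^ 2 / L1 ^ 2)) := by
  have hden : 5 * (1 - G2 ^ 2 / L1 ^ 2) ≠ 0 :=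
    mul_ne_zero (by norm_num) (sub_ne_zero.2 hratio.symm)
  have hrate : -(2 / L1) ≠ 0 := neg_ne_zero.2 (div_ne_zero two_ne_zero hL1)
  rw [IsEquilibrium, deriv_H012_Γ1_self γ G2 hL1, deriv_H012_γ1_self γ G2 hL1,
    and_iff_left rfl, mul_eq_zero_iff_left hrate, sub_eq_zero, eq_div_iff hden, mul_comm, eq_comm]

end QuadrupolarHamiltonian

theorem sq_div_sq_lt_of_lt_sqrt_mul {a b c : ℝ} (ha : 0 ≤ a) (hb : 0 < b) (h : a < √c * b) :
    a ^ 2 / b ^ 2 < c := by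
  rw [← div_pow, ← lt_sqrt (div_nonneg ha hb.le), div_lt_iff₀ hb]
  exact h

theorem two_div_five_mul_one_sub_mem_Ioo {x : ℝ} (hx : x ∈ Set.Ioo 0 (3 / 5)) :
    2 / (5 * (1 - x)) ∈ Set.Ioo (2 / 5 : ℝ) 1 := by
  obtain ⟨hpos, hlt⟩ := hx
  have hden : 0 < 5 * (1 - x) := by linarith
  rw [Set.mem_Ioo, lt_div_iff₀ hden, div_lt_one hden]
  constructor <;> linarith

theorem existsUnique_sin_sq_eq {y : ℝ} (hy : y ∈ Set.Ioo 0 1) :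
    ∃! γ : ℝ, γ ∈ Set.Ioo 0 (π / 2) ∧ sin γ ^ 2 = y := by
  have hpos : 0 < √y := sqrt_pos.2 hy.1
  have hlt : √y < 1 := (sqrt_lt' one_pos).2 (by simpa using hy.2)
  refine ⟨arcsin √y, ⟨⟨arcsin_pos.2 hpos, arcsin_lt_pi_div_two.2 hlt⟩, ?_⟩, ?_⟩
  · rw [sin_arcsin (by linarith) hlt.le, sq_sqrt hy.1.le]
  · rintro γ ⟨⟨hγ_pos, hγ_lt⟩, rfl⟩
    rw [sqrt_sq (sin_nonneg_of_nonneg_of_le_pi hγ_pos.le (by linarith)),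
      arcsin_sin (by linarith) hγ_lt.le]

/-- **Equilibria of the quadrupolar Hamiltonian and the associated periodic orbits.** -/
theorem quadrupolar_equilibria_and_periodic_orbits
    (L1 G2 : ℝ) (hL1 : 0 < L1) (hG2 : 0 < G2)
    (hlt : G2 < Real.sqrt (3 / 5) * L1) :
    (2 / (5 * (1 - G2 ^ 2 / L1 ^ 2)) ∈ Set.Ioo (2/5 : ℝ) 1) ∧
    (∃! γmin : ℝ, γmin ∈ Set.Ioo 0 (π / 2) ∧
        Real.sin γmin ^ 2 = 2 / (5 * (1 - G2 ^ 2 / L1 ^ 2))) ∧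
    (∀ γmin ∈ Set.Ioo (0:ℝ) (π / 2),
      Real.sin γmin ^ 2 = 2 / (5 * (1 - G2 ^ 2 / L1 ^ 2)) →
      ∀ γeq ∈ ({γmin, π - γmin} : Set ℝ),
        -- `(γeq, L1)` is an equilibrium of the `(γ₁,Γ₁)` Hamiltonian vector field,
        (deriv (fun Γ => H012 L1 γeq Γ G2) L1 = 0 ∧
         deriv (fun γ => H012 L1 γ L1 G2) γeq = 0) ∧
        -- and the lifted curve is a solution (a periodic orbit) of the full system.
        ∀ γ20 t : ℝ,
          HasDerivAt (fun _ : ℝ => γeq) (deriv (fun Γ => H012 L1 γeq Γ G2) L1) t ∧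
          HasDerivAt (fun _ : ℝ => L1) (-(deriv (fun γ => H012 L1 γ L1 G2) γeq)) t ∧
          HasDerivAt (fun s : ℝ => γ20 + (2 * G2 / L1 ^ 2) * s)
            (deriv (fun G => H012 L1 γeq L1 G) G2) t ∧
          HasDerivAt (fun _ : ℝ => G2) 0 t) := by
  have hratio : G2 ^ 2 / L1 ^ 2 ∈ Set.Ioo 0 (3 / 5) :=
    ⟨by positivity, sq_div_sq_lt_of_lt_sqrt_mul hG2.le hL1 hlt⟩
  have hvalue := two_div_five_mul_one_sub_mem_Ioo hratio
  refine ⟨hvalue, existsUnique_sin_sq_eq ⟨by linarith [hvalue.1], hvalue.2⟩, ?_⟩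
  intro γmin _ hsin γeq hγeq
  have hsin_eq : sin γeq = sin γmin := by
    rcases hγeq with rfl | rfl
    exacts [rfl, sin_pi_sub γmin]
  have hratio_ne : G2 ^ 2 / L1 ^ 2 ≠ 1 := (hratio.2.trans (by norm_num)).ne
  have hequil : IsEquilibrium (fun γ Γ => H012 L1 γ Γ G2) γeq L1 :=
    (isEquilibrium_H012_self_iff γeq G2 hL1.ne' hratio_ne).2 (hsin_eq ▸ hsin)
  exact ⟨hequil, hequil.isHamiltonianSolution (deriv_H012_G2_self γeq G2 hL1.ne')⟩
end
end

section
/- Hyperbolicity of the secular equilibrium in Poincaré variables. Let L_1 > 0 and 0 < Γ̃_2 < √(3/5)·L_1, and set b = 3 − 5Γ̃_2²/L_1² > 0. Consider the quadratic Hamiltonian Q(ξ, η) = (1/L_1)·(2ξ² − b·η²) on ℝ² with Hamiltonian equations ξ′ = ∂Q/∂η, η′ = −∂Q/∂ξ; its linearisation at the origin is the matrix [[0, −2b/L_1], [−4/L_1, 0]]. This matrix has two real eigenvalues ±A_2, where A_2 = (6/L_1)·√(2/3)·√(1 − (5/3)·Γ̃_2²/L_1²) > 0; in particular the origin is a hyperbolic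 saddle of the quadratic part of the quadrupolar Hamiltonian in Poincaré variables. -/
noncomputable section

open Real

/-!
A linear Hamiltonian vector field on the plane is trace-free, so the characteristic polynomial of
its matrix `M` is `X ^ 2 + det M`. For the quadratic part of the quadrupolar Hamiltonian this
determinant is `-8 b / L₁ ^ 2 = -A₂ ^ 2`, which is negative because `b > 0`.
-/

/-- The Hamiltonian vector field `(∂H/∂η, -∂H/∂ξ)` on a plane with canonical coordinates `(ξ, η)`,
as a column vector. A partial derivative that does not exist is read as `0`. -/
def hamiltonianField {𝕜 : Type*} [NontriviallyNormedField 𝕜] (H : 𝕜 → 𝕜 → 𝕜) (ξ η : 𝕜) :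
    Fin 2 → 𝕜 :=
  ![deriv (fun y => H ξ y) η, -deriv (fun x => H x η) ξ]

theorem hamiltonianField_mul_sq_add_mul_sq {𝕜 : Type*} [NontriviallyNormedField 𝕜]
    (a b ξ η : 𝕜) :
    hamiltonianField (fun x y => a * x ^ 2 + b * y ^ 2) ξ η =
      Matrix.mulVec !![0, 2 * b; -(2 * a), 0] ![ξ, η] := by
  have hderiv (c x : 𝕜) : deriv (fun y => c * y ^ 2) x = 2 * c * x := by
    rw [deriv_const_mul_field, deriv_pow_field]
    ring
  ext i
  fin_cases i <;> simp [hamiltonianField, hderiv, Matrix.mulVec, dotProduct]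

theorem hasEigenvalue_toLin'_iff_sq_eq_neg_det {R : Type*} [CommRing R] [IsDomain R]
    {M : Matrix (Fin 2) (Fin 2) R} (hM : M.trace = 0) {μ : R} :
    Module.End.HasEigenvalue (Matrix.toLin' M) μ ↔ μ ^ 2 = -M.det := by
  rw [Module.End.hasEigenvalue_iff_isRoot_charpoly, Matrix.charpoly_toLin', Matrix.charpoly_fin_two,
    hM]
  simp [Polynomial.IsRoot, eq_neg_iff_add_eq_zero]

/-- The constant `b` of the quadrupolar Hamiltonian, with `L`, `G` in the roles of `L₁`, `Γ̃₂`; its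
positivity makes the origin a saddle. -/
def quadrupolarCoeff (L G : ℝ) : ℝ :=
  3 - 5 * G ^ 2 / L ^ 2

/-- The quadratic part `Q` of the quadrupolar Hamiltonian in the Poincaré variables `(ξ, η)`. -/
def quadrupolarQuadraticPart (L G ξ η : ℝ) : ℝ :=
  (1 / L) * (2 * ξ ^ 2 - quadrupolarCoeff L G * η ^ 2)

/-- The matrix of the linear Hamiltonian vector field of `quadrupolarQuadraticPart`. -/
def quadrupolarMatrix (L G : ℝ) : Matrix (Fin 2) (Fin 2) ℝ :=
  !![0, -(2 * quadrupolarCoeff L G) / L; -4 / L, 0]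

/-- The exponent `A₂`, the rate of expansion and contraction at the saddle. -/
def quadrupolarRate (L G : ℝ) : ℝ :=
  (6 / L) * √(2 / 3) * √(1 - (5 / 3) * G ^ 2 / L ^ 2)

section Quadrupolar

variable {L G : ℝ}

theorem quadrupolarCoeff_pos (h : |G| < √(3 / 5) * L) : 0 < quadrupolarCoeff L G := by
  have hL : 0 < L := pos_of_mul_pos_right ((abs_nonneg G).trans_lt h) (sqrt_nonneg _)
  have hsq : G ^ 2 < 3 / 5 * L ^ 2 := by
    calc G ^ 2 = |G| ^ 2 := (sq_abs G).symm
      _ < (√(3 / 5) * L) ^ 2 := by gcongr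
      _ = 3 / 5 * L ^ 2 := by rw [mul_pow, sq_sqrt (by norm_num)]
  rw [quadrupolarCoeff, sub_pos, div_lt_iff₀ (by positivity)]
  linarith

theorem quadrupolarRate_eq (L G : ℝ) :
    quadrupolarRate L G = (6 / L) * √(2 / 3) * √(quadrupolarCoeff L G / 3) := by
  rw [quadrupolarRate, quadrupolarCoeff]
  ring_nf

theorem quadrupolarRate_pos (hL : 0 < L) (hb : 0 < quadrupolarCoeff L G) :
    0 < quadrupolarRate L G := by
  rw [quadrupolarRate_eq]
  positivity

theorem quadrupolarRate_sq (hb : 0 ≤ quadrupolarCoeff L G) :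
    quadrupolarRate L G ^ 2 = 8 * quadrupolarCoeff L G / L ^ 2 := by
  rw [quadrupolarRate_eq, mul_pow, mul_pow, sq_sqrt (by norm_num), sq_sqrt (by positivity)]
  ring

theorem hamiltonianField_quadrupolarQuadraticPart (L G ξ η : ℝ) :
    hamiltonianField (quadrupolarQuadraticPart L G) ξ η =
      (quadrupolarMatrix L G).mulVec ![ξ, η] := by
  have hQ : quadrupolarQuadraticPart L G =
      fun x y => 2 / L * x ^ 2 + -quadrupolarCoeff L G / L * y ^ 2 := by
    ext x y
    rw [quadrupolarQuadraticPart]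
    ring
  have hM : quadrupolarMatrix L G =
      !![0, 2 * (-quadrupolarCoeff L G / L); -(2 * (2 / L)), 0] := by
    rw [quadrupolarMatrix]
    ring_nf
  rw [hQ, hM, hamiltonianField_mul_sq_add_mul_sq]

theorem det_quadrupolarMatrix (L G : ℝ) :
    (quadrupolarMatrix L G).det = -(8 * quadrupolarCoeff L G / L ^ 2) := by
  rw [quadrupolarMatrix, Matrix.det_fin_two_of]
  ring

theorem hasEigenvalue_quadrupolarMatrix_iff (hb : 0 ≤ quadrupolarCoeff L G) {μ : ℝ} :
    Module.End.HasEigenvalue (Matrix.toLin' (quadrupolarMatrix L G)) μ ↔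
      μ = quadrupolarRate L G ∨ μ = -quadrupolarRate L G := by
  have htrace : (quadrupolarMatrix L G).trace = 0 := by
    simp [quadrupolarMatrix, Matrix.trace_fin_two]
  rw [hasEigenvalue_toLin'_iff_sq_eq_neg_det htrace, det_quadrupolarMatrix, neg_neg,
    ← quadrupolarRate_sq hb, sq_eq_sq_iff_eq_or_eq_neg]

end Quadrupolar

/-- **Hyperbolicity of the secular equilibrium in Poincaré variables.** The quadratic part
`Q(ξ,η) = (1/L₁)(2ξ² − bη²)` of the quadrupolar Hamiltonian in Poincaré variables has, as
linearisation of its Hamiltonian vector field at the origin, the matrix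
`[[0, −2b/L₁], [−4/L₁, 0]]`, whose eigenvalues are `±A₂` with `A₂ > 0`. -/
theorem quadrupolar_origin_hyperbolic
    (L1 G2 : ℝ) (hL1 : 0 < L1) (hG2 : 0 < G2)
    (hlt : G2 < Real.sqrt (3 / 5) * L1) :
    (0 < 3 - 5 * G2 ^ 2 / L1 ^ 2) ∧
    (0 < (6 / L1) * Real.sqrt (2 / 3) * Real.sqrt (1 - (5 / 3) * G2 ^ 2 / L1 ^ 2)) ∧
    -- the Hamiltonian vector field of `Q` is linear, given by the matrix
    (∀ ξ η : ℝ,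
      Matrix.mulVec !![0, -(2 * (3 - 5 * G2 ^ 2 / L1 ^ 2)) / L1; -(4 : ℝ) / L1, 0] ![ξ, η]
        = ![deriv (fun y => (1 / L1) * (2 * ξ ^ 2 - (3 - 5 * G2 ^ 2 / L1 ^ 2) * y ^ 2)) η,
            -(deriv (fun x => (1 / L1) * (2 * x ^ 2 - (3 - 5 * G2 ^ 2 / L1 ^ 2) * η ^ 2)) ξ)]) ∧
    -- the matrix has the two real eigenvalues `± A₂`
    Module.End.HasEigenvalue
      (Matrix.toLin' !![0, -(2 * (3 - 5 * G2 ^ 2 / L1 ^ 2)) / L1; -(4 : ℝ) / L1, 0])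
      ((6 / L1) * Real.sqrt (2 / 3) * Real.sqrt (1 - (5 / 3) * G2 ^ 2 / L1 ^ 2)) ∧
    Module.End.HasEigenvalue
      (Matrix.toLin' !![0, -(2 * (3 - 5 * G2 ^ 2 / L1 ^ 2)) / L1; -(4 : ℝ) / L1, 0])
      (-((6 / L1) * Real.sqrt (2 / 3) * Real.sqrt (1 - (5 / 3) * G2 ^ 2 / L1 ^ 2))) := by
  have hb : 0 < quadrupolarCoeff L1 G2 :=
    quadrupolarCoeff_pos (by rwa [abs_of_pos hG2])
  exact ⟨hb, quadrupolarRate_pos hL1 hb,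
    fun ξ η => (hamiltonianField_quadrupolarQuadraticPart L1 G2 ξ η).symm,
    (hasEigenvalue_quadrupolarMatrix_iff hb.le).mpr (Or.inl rfl),
    (hasEigenvalue_quadrupolarMatrix_iff hb.le).mpr (Or.inr rfl)⟩
end
end

section
/- Explicit separatrix solution of the quadrupolar Hamiltonian (Lemma 5.1, part 1). Let L_1 > 0, 0 < Γ̃_2 < √(3/5)·L_1, and let χ, A_2 be as defined. For t ∈ ℝ let γ_1(t) ∈ (0, π) be determined by cos γ_1(t) = √(3/5)·sinh(A_2 t)/√(χ² + (1 + χ²) sinh²(A_2 t)), let Γ_1(t) = Γ̃_2 √(5/3)·√(1 + (3/5)(L_1²/Γ̃_2²) sinh²(A_2 t))/cosh(A_2 t), and for any γ̃_2^0 ∈ ℝ let γ̃_2(t) = γ̃_2^0 + (2Γ̃_2/L_1²)t + arctan(χ^{−1} tanh(A_2 t)). Then: (i) for all t ∈ ℝ, Γ̃_2 < Γ_1(t) ≤ L_1 and (1 − Γ̃_2²/Γ_1(t)²)·sin²γ_1(t) = 2/5; (ii) the curve t ↦ (γ_1(t), Γ_1(t), γ̃_2(t), Γ̃_2) is a solution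 of the Hamiltonian system dγ_1/dt = ∂H_0^{12}/∂Γ_1, dΓ_1/dt = −∂H_0^{12}/∂γ_1, dγ̃_2/dt = ∂H_0^{12}/∂Γ̃_2, dΓ̃_2/dt = 0. -/
noncomputable section

open Real

/-!
On the set `(1 - G² / Γ²) sin² γ = 2 / 5` the second factor of `H012` vanishes, so only its
derivatives and that of `G² / L²` enter Hamilton's equations. In the time `τ = A₂ t`, with
`W = √(5/3 G² + L² sinh² τ)` and `σ = √((3L² - 5G²) / 2)`, one has `χ = G / σ`, `A₂ = 4σ / L²`
and the curve becomes `cot γ₁ = σ sinh τ / W`, `Γ₁ = W / cosh τ`. Everything then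
follows from `cosh² τ - sinh² τ = 1`, mostly through the quadratic form
`M = G² cosh² τ + σ² sinh² τ`, for which `W² + σ² sinh² τ = 5/3 M` and `W² - G² cosh² τ = 2/3 M`.
-/

section PartialDerivatives

theorem hasDerivAt_H012_action (L γ G : ℝ) {Γ : ℝ} (hΓ : Γ ≠ 0) :
    HasDerivAt (fun x => H012 L γ x G)
      (-(2 * Γ / L ^ 2) * (2 - 5 * (1 - G ^ 2 / Γ ^ 2) * sin γ ^ 2)
        - 10 * (1 - Γ ^ 2 / L ^ 2) * (G ^ 2 / Γ ^ 3) * sin γ ^ 2) Γ := by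
  unfold H012
  have hsq : HasDerivAt (fun x : ℝ => x ^ 2) (2 * Γ) Γ := by simpa using hasDerivAt_pow 2 Γ
  have hinv : HasDerivAt (fun x : ℝ => G ^ 2 / x ^ 2) (-(2 * G ^ 2 / Γ ^ 3)) Γ := by
    refine ((hasDerivAt_const Γ (G ^ 2)).fun_div hsq (pow_ne_zero 2 hΓ)).congr_deriv ?_
    field_simp
    ring
  refine ((((hsq.div_const (L ^ 2)).const_sub 1).fun_mul
    ((((hinv.const_sub 1).const_mul 5).mul_const (sin γ ^ 2)).const_sub 2)).add_const
      (G ^ 2 / L ^ 2)).congr_deriv ?_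
  ring

theorem hasDerivAt_H012_angle (L γ Γ G : ℝ) :
    HasDerivAt (fun x => H012 L x Γ G)
      (-(10 * (1 - Γ ^ 2 / L ^ 2) * (1 - G ^ 2 / Γ ^ 2) * (sin γ * cos γ))) γ := by
  unfold H012
  refine ((((((hasDerivAt_sin γ).fun_pow 2).const_mul
    (5 * (1 - G ^ 2 / Γ ^ 2))).const_sub 2).const_mul (1 - Γ ^ 2 / L ^ 2)).add_const
      (G ^ 2 / L ^ 2)).congr_deriv ?_
  push_cast
  ring

theorem hasDerivAt_H012_outerAction (L γ Γ G : ℝ) :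
    HasDerivAt (fun x => H012 L γ Γ x)
      (10 * (1 - Γ ^ 2 / L ^ 2) * (G / Γ ^ 2) * sin γ ^ 2 + 2 * G / L ^ 2) G := by
  unfold H012
  have hsq : HasDerivAt (fun x : ℝ => x ^ 2) (2 * G) G := by simpa using hasDerivAt_pow 2 G
  refine (((((((hsq.div_const (Γ ^ 2)).const_sub 1).const_mul 5).mul_const
    (sin γ ^ 2)).const_sub 2).const_mul (1 - Γ ^ 2 / L ^ 2)).fun_add
      (hsq.div_const (L ^ 2))).congr_deriv ?_
  ring

end PartialDerivatives

section Separatrix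

/-- The constant `σ = √((3L² - 5G²) / 2)`, through which `χ = G / σ` and `A₂ = 4σ / L²`. -/
def separatrixSigma (L G : ℝ) : ℝ := √((3 * L ^ 2 - 5 * G ^ 2) / 2)

/-- The rate `A₂ = 4σ / L²` relating physical time `t` to the time `τ = A₂ t` in which the
separatrix is parametrized below. -/
def separatrixRate (L G : ℝ) : ℝ := 4 * separatrixSigma L G / L ^ 2

/-- The radical `W = √(5/3 G² + L² sinh² τ)`; it equals `Γ₁ cosh τ` along the separatrix. -/
def separatrixRadical (L G τ : ℝ) : ℝ := √(5 / 3 * G ^ 2 + L ^ 2 * sinh τ ^ 2)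

/-- The angle `γ₁` along the separatrix, encoded as the arccotangent of `σ sinh τ / W`. -/
def separatrixAngle (L G τ : ℝ) : ℝ :=
  π / 2 - arctan (separatrixSigma L G * sinh τ / separatrixRadical L G τ)

/-- The action `Γ₁` along the separatrix. -/
def separatrixAction (L G τ : ℝ) : ℝ := separatrixRadical L G τ / cosh τ

variable {L G : ℝ}

theorem ne_zero_of_five_mul_sq_le (hG : G ≠ 0) (h : 5 * G ^ 2 ≤ 3 * L ^ 2) : L ≠ 0 := by
  rintro rfl
  linarith [sq_pos_iff.2 hG]

theorem separatrixSigma_pos (h : 5 * G ^ 2 < 3 * L ^ 2) : 0 < separatrixSigma L G :=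
  sqrt_pos.2 (by linarith)

theorem sq_separatrixSigma (h : 5 * G ^ 2 ≤ 3 * L ^ 2) :
    separatrixSigma L G ^ 2 = (3 * L ^ 2 - 5 * G ^ 2) / 2 :=
  sq_sqrt (by linarith)

theorem separatrixRadical_pos (hG : G ≠ 0) (τ : ℝ) : 0 < separatrixRadical L G τ :=
  sqrt_pos.2 (by positivity)

theorem sq_separatrixRadical (L G τ : ℝ) :
    separatrixRadical L G τ ^ 2 = 5 / 3 * G ^ 2 + L ^ 2 * sinh τ ^ 2 :=
  sq_sqrt (by positivity)

theorem sq_separatrixRadical_add (h : 5 * G ^ 2 ≤ 3 * L ^ 2) (τ : ℝ) :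
    separatrixRadical L G τ ^ 2 + separatrixSigma L G ^ 2 * sinh τ ^ 2 =
      5 / 3 * (G ^ 2 * cosh τ ^ 2 + separatrixSigma L G ^ 2 * sinh τ ^ 2) := by
  rw [sq_separatrixRadical, sq_separatrixSigma h, cosh_sq]
  ring

theorem sq_separatrixRadical_sub (h : 5 * G ^ 2 ≤ 3 * L ^ 2) (τ : ℝ) :
    separatrixRadical L G τ ^ 2 - G ^ 2 * cosh τ ^ 2 =
      2 / 3 * (G ^ 2 * cosh τ ^ 2 + separatrixSigma L G ^ 2 * sinh τ ^ 2) := by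
  rw [sq_separatrixRadical, sq_separatrixSigma h, cosh_sq]
  ring

theorem separatrixAngle_mem_Ioo (L G τ : ℝ) : separatrixAngle L G τ ∈ Set.Ioo 0 π := by
  unfold separatrixAngle
  constructor <;>
    linarith [arctan_lt_pi_div_two (separatrixSigma L G * sinh τ / separatrixRadical L G τ),
      neg_pi_div_two_lt_arctan (separatrixSigma L G * sinh τ / separatrixRadical L G τ)]

theorem cos_separatrixAngle_eq_mul_sin (L G τ : ℝ) :
    cos (separatrixAngle L G τ) =
      separatrixSigma L G * sinh τ / separatrixRadical L G τ * sin (separatrixAngle L G τ) := by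
  rw [separatrixAngle, cos_pi_div_two_sub, sin_pi_div_two_sub,
    ← tan_mul_cos (cos_arctan_pos _).ne', tan_arctan]

theorem sq_sin_separatrixAngle (hG : G ≠ 0) (h : 5 * G ^ 2 ≤ 3 * L ^ 2) (τ : ℝ) :
    sin (separatrixAngle L G τ) ^ 2 = 3 * separatrixRadical L G τ ^ 2 /
      (5 * (G ^ 2 * cosh τ ^ 2 + separatrixSigma L G ^ 2 * sinh τ ^ 2)) := by
  have hW := separatrixRadical_pos (L := L) hG τ
  rw [separatrixAngle, sin_pi_div_two_sub, cos_sq_arctan]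
  field_simp
  linear_combination -3 * sq_separatrixRadical_add h τ

theorem separatrixAction_pos (hG : G ≠ 0) (τ : ℝ) : 0 < separatrixAction L G τ :=
  div_pos (separatrixRadical_pos hG τ) (cosh_pos τ)

theorem one_sub_sq_div_sq_separatrixAction (hG : G ≠ 0) (h : 5 * G ^ 2 ≤ 3 * L ^ 2) (τ : ℝ) :
    1 - G ^ 2 / separatrixAction L G τ ^ 2 =
      2 * (G ^ 2 * cosh τ ^ 2 + separatrixSigma L G ^ 2 * sinh τ ^ 2) /
        (3 * separatrixRadical L G τ ^ 2) := by
  have hW := separatrixRadical_pos (L := L) hG τ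
  rw [separatrixAction]
  field_simp
  linear_combination 3 * sq_separatrixRadical_sub h τ

theorem one_sub_sq_separatrixAction_div_sq (hL : L ≠ 0) (h : 5 * G ^ 2 ≤ 3 * L ^ 2) (τ : ℝ) :
    1 - separatrixAction L G τ ^ 2 / L ^ 2 =
      2 * separatrixSigma L G ^ 2 / (3 * L ^ 2 * cosh τ ^ 2) := by
  rw [separatrixAction, div_pow, sq_separatrixRadical, sq_separatrixSigma h]
  field_simp
  rw [cosh_sq]
  ring

theorem abs_lt_separatrixAction (hG : G ≠ 0) (h : 5 * G ^ 2 ≤ 3 * L ^ 2) (τ : ℝ) :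
    |G| < separatrixAction L G τ := by
  have hΓ := separatrixAction_pos (L := L) hG τ
  have hW := separatrixRadical_pos (L := L) hG τ
  have hpos : 0 < 1 - G ^ 2 / separatrixAction L G τ ^ 2 := by
    rw [one_sub_sq_div_sq_separatrixAction hG h]
    positivity
  refine abs_lt_of_sq_lt_sq ?_ hΓ.le
  rwa [sub_pos, div_lt_one (by positivity)] at hpos

theorem separatrixAction_le_abs (hL : L ≠ 0) (h : 5 * G ^ 2 ≤ 3 * L ^ 2) (τ : ℝ) :
    separatrixAction L G τ ≤ |L| := by
  have hnonneg : 0 ≤ 1 - separatrixAction L G τ ^ 2 / L ^ 2 := by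
    rw [one_sub_sq_separatrixAction_div_sq hL h]
    positivity
  refine (le_abs_self _).trans (sq_le_sq.1 ?_)
  rwa [sub_nonneg, div_le_one (by positivity)] at hnonneg

theorem separatrix_relation (hG : G ≠ 0) (h : 5 * G ^ 2 ≤ 3 * L ^ 2) (τ : ℝ) :
    (1 - G ^ 2 / separatrixAction L G τ ^ 2) * sin (separatrixAngle L G τ) ^ 2 = 2 / 5 := by
  have hW := separatrixRadical_pos (L := L) hG τ
  rw [one_sub_sq_div_sq_separatrixAction hG h, sq_sin_separatrixAngle hG h]
  field_simp

end Separatrix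

section Derivatives

variable {L G : ℝ}

theorem hasDerivAt_separatrixRadical (hG : G ≠ 0) (τ : ℝ) :
    HasDerivAt (separatrixRadical L G) (L ^ 2 * sinh τ * cosh τ / separatrixRadical L G τ) τ := by
  refine (((((hasDerivAt_sinh τ).fun_pow 2).const_mul (L ^ 2)).const_add
    (5 / 3 * G ^ 2)).sqrt (by positivity)).congr_deriv ?_
  rw [separatrixRadical]
  push_cast
  ring

theorem hasDerivAt_separatrixAction (hG : G ≠ 0) (h : 5 * G ^ 2 ≤ 3 * L ^ 2) (τ : ℝ) :
    HasDerivAt (separatrixAction L G)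
      (2 * separatrixSigma L G ^ 2 * sinh τ / (3 * separatrixRadical L G τ * cosh τ ^ 2)) τ := by
  have hW := separatrixRadical_pos (L := L) hG τ
  refine ((hasDerivAt_separatrixRadical hG τ).div (hasDerivAt_cosh τ)
    (cosh_pos τ).ne').congr_deriv ?_
  field_simp
  rw [sq_separatrixRadical, sq_separatrixSigma h, cosh_sq]
  ring

theorem hasDerivAt_separatrixAngle (hG : G ≠ 0) (h : 5 * G ^ 2 ≤ 3 * L ^ 2) (τ : ℝ) :
    HasDerivAt (separatrixAngle L G)
      (-(separatrixSigma L G * G ^ 2 * cosh τ / (separatrixRadical L G τ *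
        (G ^ 2 * cosh τ ^ 2 + separatrixSigma L G ^ 2 * sinh τ ^ 2)))) τ := by
  set σ := separatrixSigma L G
  set W := separatrixRadical L G τ with hWdef
  have hW : 0 < W := separatrixRadical_pos hG τ
  have hcot : HasDerivAt (fun x => σ * sinh x / separatrixRadical L G x)
      (5 / 3 * σ * G ^ 2 * cosh τ / W ^ 3) τ := by
    refine (((hasDerivAt_sinh τ).const_mul σ).fun_div
      (hasDerivAt_separatrixRadical hG τ) hW.ne').congr_deriv ?_
    rw [← hWdef]
    field_simp
    rw [hWdef, sq_separatrixRadical]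
    ring
  have hsum : 1 + (σ * sinh τ / W) ^ 2 =
      5 / 3 * (G ^ 2 * cosh τ ^ 2 + σ ^ 2 * sinh τ ^ 2) / W ^ 2 := by
    have hM : W ^ 2 + σ ^ 2 * sinh τ ^ 2 = 5 / 3 * (G ^ 2 * cosh τ ^ 2 + σ ^ 2 * sinh τ ^ 2) :=
      sq_separatrixRadical_add h τ
    rw [← hM]
    field_simp
  refine (hcot.arctan.const_sub (π / 2)).congr_deriv ?_
  rw [hsum]
  field_simp

theorem hasDerivAt_tanh (τ : ℝ) : HasDerivAt tanh (1 / cosh τ ^ 2) τ := by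
  simp only [funext tanh_eq_sinh_div_cosh]
  refine ((hasDerivAt_sinh τ).fun_div (hasDerivAt_cosh τ) (cosh_pos τ).ne').congr_deriv ?_
  rw [← cosh_sq_sub_sinh_sq τ]
  ring

theorem hasDerivAt_arctan_div_mul_tanh (a : ℝ) {b : ℝ} (hb : b ≠ 0) (τ : ℝ) :
    HasDerivAt (fun x => arctan (a / b * tanh x))
      (a * b / (b ^ 2 * cosh τ ^ 2 + a ^ 2 * sinh τ ^ 2)) τ := by
  refine ((hasDerivAt_tanh τ).const_mul (a / b)).arctan.congr_deriv ?_
  rw [tanh_eq_sinh_div_cosh]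
  field_simp

end Derivatives

section HamiltonEquations

variable {L G : ℝ}

theorem hasDerivAt_separatrixAngle_rate_mul (hG : G ≠ 0) (h : 5 * G ^ 2 ≤ 3 * L ^ 2)
    (t : ℝ) :
    HasDerivAt (fun t => separatrixAngle L G (separatrixRate L G * t))
      (deriv (fun Γ => H012 L (separatrixAngle L G (separatrixRate L G * t)) Γ G)
        (separatrixAction L G (separatrixRate L G * t))) t := by
  refine ((hasDerivAt_separatrixAngle hG h _).comp t (hasDerivAt_const_mul _)).congr_deriv ?_
  generalize separatrixRate L G * t = τ
  have hL := ne_zero_of_five_mul_sq_le hG h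
  have hW := separatrixRadical_pos (L := L) hG τ
  rw [(hasDerivAt_H012_action L _ G (separatrixAction_pos hG τ).ne').deriv, mul_assoc 5,
    separatrix_relation hG h, one_sub_sq_separatrixAction_div_sq hL h, sq_sin_separatrixAngle hG h,
    separatrixAction, separatrixRate]
  field_simp
  ring

theorem hasDerivAt_separatrixAction_rate_mul (hG : G ≠ 0) (h : 5 * G ^ 2 ≤ 3 * L ^ 2)
    (t : ℝ) :
    HasDerivAt (fun t => separatrixAction L G (separatrixRate L G * t))
      (-deriv (fun γ => H012 L γ (separatrixAction L G (separatrixRate L G * t)) G)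
        (separatrixAngle L G (separatrixRate L G * t))) t := by
  refine ((hasDerivAt_separatrixAction hG h _).comp t (hasDerivAt_const_mul _)).congr_deriv ?_
  generalize separatrixRate L G * t = τ
  have hL := ne_zero_of_five_mul_sq_le hG h
  have hW := separatrixRadical_pos (L := L) hG τ
  symm
  calc -deriv (fun γ => H012 L γ (separatrixAction L G τ) G) (separatrixAngle L G τ)
      = 10 * (1 - separatrixAction L G τ ^ 2 / L ^ 2) *
          ((1 - G ^ 2 / separatrixAction L G τ ^ 2) * sin (separatrixAngle L G τ) ^ 2) *
          (separatrixSigma L G * sinh τ / separatrixRadical L G τ) := by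
        rw [(hasDerivAt_H012_angle L _ _ G).deriv, cos_separatrixAngle_eq_mul_sin]
        ring
    _ = 2 * separatrixSigma L G ^ 2 * sinh τ / (3 * separatrixRadical L G τ * cosh τ ^ 2) *
          separatrixRate L G := by
        rw [separatrix_relation hG h, one_sub_sq_separatrixAction_div_sq hL h, separatrixRate]
        field_simp
        ring

theorem hasDerivAt_separatrixOuterAngle_rate_mul (hG : G ≠ 0) (h : 5 * G ^ 2 ≤ 3 * L ^ 2)
    (γ₀ t : ℝ) :
    HasDerivAt (fun t => γ₀ + 2 * G / L ^ 2 * t +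
        arctan (separatrixSigma L G / G * tanh (separatrixRate L G * t)))
      (deriv (fun x => H012 L (separatrixAngle L G (separatrixRate L G * t))
        (separatrixAction L G (separatrixRate L G * t)) x) G) t := by
  refine (((hasDerivAt_const_mul (2 * G / L ^ 2)).const_add γ₀).add
    ((hasDerivAt_arctan_div_mul_tanh (separatrixSigma L G) hG _).comp t
      (hasDerivAt_const_mul (separatrixRate L G)))).congr_deriv ?_
  generalize separatrixRate L G * t = τ
  have hL := ne_zero_of_five_mul_sq_le hG h
  have hW := separatrixRadical_pos (L := L) hG τ
  rw [(hasDerivAt_H012_outerAction L _ _ G).deriv, one_sub_sq_separatrixAction_div_sq hL h,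
    sq_sin_separatrixAngle hG h, separatrixAction, separatrixRate]
  field_simp
  ring

end HamiltonEquations

section ExplicitFormulas

variable {L G : ℝ}

theorem five_mul_sq_lt_of_lt_sqrt_mul (hG : 0 ≤ G) (h : G < √(3 / 5) * L) :
    5 * G ^ 2 < 3 * L ^ 2 := by
  have hsq := pow_lt_pow_left₀ h hG two_ne_zero
  rw [mul_pow, sq_sqrt (by norm_num)] at hsq
  linarith

theorem sqrt_one_sub_eq_separatrixSigma (hL : 0 < L) :
    √(1 - 5 / 3 * G ^ 2 / L ^ 2) = √(2 / 3) * separatrixSigma L G / L := by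
  rw [separatrixSigma, ← sqrt_mul (by norm_num), eq_div_iff hL.ne']
  nth_rw 2 [← sqrt_sq hL.le]
  rw [← sqrt_mul' _ (sq_nonneg L)]
  congr 1
  field_simp

theorem separatrixRate_eq (hL : 0 < L) :
    6 / L * √(2 / 3) * √(1 - 5 / 3 * G ^ 2 / L ^ 2) = separatrixRate L G := by
  have hsq : √(2 / 3 : ℝ) ^ 2 = 2 / 3 := sq_sqrt (by norm_num)
  rw [sqrt_one_sub_eq_separatrixSigma hL, separatrixRate]
  field_simp
  rw [hsq]
  ring

theorem separatrixChi_eq (hL : 0 < L) :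
    √(2 / 3) * (G / L) / √(1 - 5 / 3 * G ^ 2 / L ^ 2) = G / separatrixSigma L G := by
  rw [sqrt_one_sub_eq_separatrixSigma hL]
  field_simp

theorem separatrixAction_eq (hG : 0 < G) (τ : ℝ) :
    G * √(5 / 3) * √(1 + 3 / 5 * (L ^ 2 / G ^ 2) * sinh τ ^ 2) / cosh τ =
      separatrixAction L G τ := by
  rw [separatrixAction, separatrixRadical, mul_assoc, ← sqrt_mul (by norm_num)]
  nth_rw 1 [← sqrt_sq hG.le]
  rw [← sqrt_mul (sq_nonneg G)]
  congr 2
  field_simp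

theorem cos_separatrixAngle (hG : G ≠ 0) (h : 5 * G ^ 2 < 3 * L ^ 2) (τ : ℝ) :
    cos (separatrixAngle L G τ) = √(3 / 5) * sinh τ /
      √((G / separatrixSigma L G) ^ 2 + (1 + (G / separatrixSigma L G) ^ 2) * sinh τ ^ 2) := by
  have hσ := separatrixSigma_pos h
  have hW := separatrixRadical_pos (L := L) hG τ
  set σ := separatrixSigma L G
  set W := separatrixRadical L G τ
  have hradicand : (G / σ) ^ 2 + (1 + (G / σ) ^ 2) * sinh τ ^ 2 =
      3 / 5 * (1 + (σ * sinh τ / W) ^ 2) * (W / σ) ^ 2 := by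
    have hM := sq_separatrixRadical_add h.le τ
    rw [cosh_sq] at hM
    field_simp
    linear_combination -3 * hM
  have hcos : cos (separatrixAngle L G τ) = σ * sinh τ / W / √(1 + (σ * sinh τ / W) ^ 2) := by
    rw [separatrixAngle, cos_pi_div_two_sub, sin_arctan]
  rw [hcos, hradicand, sqrt_mul (by positivity), sqrt_mul (by norm_num), sqrt_sq (by positivity)]
  field_simp

theorem separatrixAngle_eq (hG : G ≠ 0) (h : 5 * G ^ 2 < 3 * L ^ 2) (τ : ℝ) :
    arccos (√(3 / 5) * sinh τ /
      √((G / separatrixSigma L G) ^ 2 + (1 + (G / separatrixSigma L G) ^ 2) * sinh τ ^ 2)) =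
      separatrixAngle L G τ := by
  have hmem := separatrixAngle_mem_Ioo L G τ
  rw [← cos_separatrixAngle hG h, arccos_cos hmem.1.le hmem.2.le]

end ExplicitFormulas

/-- **Explicit separatrix solution of the quadrupolar Hamiltonian (Lemma 5.1, part 1).** -/
theorem quadrupolar_separatrix_solution
    (L1 G2 : ℝ) (hL1 : 0 < L1) (hG2 : 0 < G2)
    (hlt : G2 < Real.sqrt (3 / 5) * L1) (γ20 : ℝ) :
    let χ : ℝ := Real.sqrt (2 / 3) * (G2 / L1) / Real.sqrt (1 - (5 / 3) * G2 ^ 2 / L1 ^ 2)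
    let A2 : ℝ := (6 / L1) * Real.sqrt (2 / 3) * Real.sqrt (1 - (5 / 3) * G2 ^ 2 / L1 ^ 2)
    -- `γ₁(t) ∈ (0,π)` is determined by the formula for its cosine
    let γ1 : ℝ → ℝ := fun t => Real.arccos (Real.sqrt (3 / 5) * Real.sinh (A2 * t) /
      Real.sqrt (χ ^ 2 + (1 + χ ^ 2) * Real.sinh (A2 * t) ^ 2))
    let Γ1 : ℝ → ℝ := fun t => G2 * Real.sqrt (5 / 3) *
      Real.sqrt (1 + (3 / 5) * (L1 ^ 2 / G2 ^ 2) * Real.sinh (A2 * t) ^ 2) / Real.cosh (A2 * t)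
    let γ2 : ℝ → ℝ := fun t => γ20 + (2 * G2 / L1 ^ 2) * t
      + Real.arctan (χ⁻¹ * Real.tanh (A2 * t))
    ∀ t : ℝ,
      (γ1 t ∈ Set.Ioo 0 π ∧
        Real.cos (γ1 t) = Real.sqrt (3 / 5) * Real.sinh (A2 * t) /
          Real.sqrt (χ ^ 2 + (1 + χ ^ 2) * Real.sinh (A2 * t) ^ 2)) ∧
      -- (i) the curve lies on the separatrix
      (G2 < Γ1 t ∧ Γ1 t ≤ L1) ∧
      (1 - G2 ^ 2 / (Γ1 t) ^ 2) * Real.sin (γ1 t) ^ 2 = 2 / 5 ∧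
      -- (ii) it is a solution of the Hamiltonian system of `H₀¹²`
      HasDerivAt γ1 (deriv (fun Γ => H012 L1 (γ1 t) Γ G2) (Γ1 t)) t ∧
      HasDerivAt Γ1 (-(deriv (fun γ => H012 L1 γ (Γ1 t) G2) (γ1 t))) t ∧
      HasDerivAt γ2 (deriv (fun G => H012 L1 (γ1 t) (Γ1 t) G) G2) t ∧
      HasDerivAt (fun _ : ℝ => G2) 0 t := by
  intro χ A2 γ1 Γ1 γ2 t
  have h := five_mul_sq_lt_of_lt_sqrt_mul hG2.le hlt
  have hχ : χ = G2 / separatrixSigma L1 G2 := separatrixChi_eq hL1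
  have hA2 : A2 = separatrixRate L1 G2 := separatrixRate_eq hL1
  have hγ1 : γ1 = fun t => separatrixAngle L1 G2 (A2 * t) := by
    funext t
    simp only [γ1, hχ, separatrixAngle_eq hG2.ne' h]
  have hΓ1 : Γ1 = fun t => separatrixAction L1 G2 (A2 * t) :=
    funext fun t => separatrixAction_eq hG2 (A2 * t)
  have hγ2 : γ2 = fun t => γ20 + 2 * G2 / L1 ^ 2 * t +
      arctan (separatrixSigma L1 G2 / G2 * tanh (A2 * t)) := by
    simp only [γ2, hχ, inv_div]
  rw [hγ1, hΓ1, hγ2, hχ, hA2]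
  exact ⟨⟨separatrixAngle_mem_Ioo .., cos_separatrixAngle hG2.ne' h _⟩,
    ⟨(le_abs_self _).trans_lt (abs_lt_separatrixAction hG2.ne' h.le _),
      (separatrixAction_le_abs hL1.ne' h.le _).trans_eq (abs_of_pos hL1)⟩,
    separatrix_relation hG2.ne' h.le _,
    hasDerivAt_separatrixAngle_rate_mul hG2.ne' h.le t,
    hasDerivAt_separatrixAction_rate_mul hG2.ne' h.le t,
    hasDerivAt_separatrixOuterAngle_rate_mul hG2.ne' h.le γ20 t,
    hasDerivAt_const t G2⟩
end
end
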